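/- Assume the Schanuel Conjecture: for every n and every ℚ-linearly independent tuple x ∈ ℂ^n, trdeg(x, exp(x)) ≥ n. Let B be a finite subset of ℂ which is strong with respect to δ_exp, i.e. for every finite tuple x of complex numbers, δ_exp(x/B) ≥ 0. Then the set of all x₀ ∈ ℂ such that either x₀ lies in the ℚ-linear span of B, or there exists a finite tuple x of complex numbers containing x₀, ℚ-linearly independent over the ℚ-linear span of B, with δ_exp(x/B) = 0, is countable. -/

import Mathlib

/-!
Let `K = ℚ(B, exp B)`, a countable field, and let `x` be `ℚ`-linearly independent over the span of
`B` with `δ_exp(x/B) = 0`. A derivation `D` of `ℂ` over `K` with `D (exp xᵢ) = exp xᵢ * D xᵢ` for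
all `i` must kill `x` (Kirby). To see this, split the span of `x` into the kernel of `D`, with
basis `c`, and a complement with basis `y`. Since `B` is strong, `(c, exp c)` has transcendence
degree at least `|c|` over `K`. By Ax's theorem, `(y, exp y)` has transcendence degree greater than
`|y|` over the field of constants of `D`, which contains `(c, exp c)`, unless `y` is empty. The
degrees add up to at most `trdeg (x, exp x / K) = |c| + |y|`, hence `y` is empty.

Consequently `x` is a nondegenerate zero of the finitely many exponential polynomials generating the
ideal of `(x, exp x)` over `K`: a vector annihilated by their differentials extends to a derivation
as above. Nondegenerate zeros are isolated, so each system has countably many of them, and there are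
only countably many systems over `K`.

Ax's theorem follows from Rosenlicht's approach: otherwise the differential forms `dzᵢ / zᵢ - dyᵢ`,
`zᵢ = exp yᵢ`, would be linearly dependent. Their relations are stable under `D`, so one of them has
constant coefficients, and comparing residues shows that such a relation is trivial.
-/

open Complex

noncomputable section

/-- `F`-linear dimension of `s` over `B`: the dimension of the image of the
`F`-span of `s` in the quotient of ℂ by the `F`-span of `B`. -/
def linDimOver (F : Type*) [Field F] [Algebra F ℂ] (B s : Set ℂ) : ℕ :=
  Module.finrank F ((Submodule.span F s).map (Submodule.span F B).mkQ)

/-- Transcendence degree over ℚ of ℚ(s): the size of the largest algebraically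
independent finite subset of `s`. -/
def trdeg (s : Set ℂ) : ℕ :=
  sSup {k : ℕ | ∃ t : Finset ℂ, ↑t ⊆ s ∧ t.card = k ∧
    AlgebraicIndependent ℚ (fun x : {y : ℂ // y ∈ t} => (x : ℂ))}

/-- Transcendence degree of ℚ(C)(s) over ℚ(C). -/
def trdegOver (C s : Set ℂ) : ℕ :=
  sSup {k : ℕ | ∃ t : Finset ℂ, ↑t ⊆ s ∧ t.card = k ∧
    AlgebraicIndependent (IntermediateField.adjoin ℚ C) (fun x : {y : ℂ // y ∈ t} => (x : ℂ))}

/-- `δ_exp(x/B) = trdeg(x, exp x / B ∪ exp B) − lin.d._ℚ(x/B)`, as an integer. -/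
def deltaExp (B : Set ℂ) {n : ℕ} (x : Fin n → ℂ) : ℤ :=
  (trdegOver (B ∪ Complex.exp '' B)
      (Set.range x ∪ Set.range fun i => Complex.exp (x i)) : ℤ)
    - linDimOver ℚ B (Set.range x)

end

section ExtensionOfDerivations

open MvPolynomial TrivSqZeroExt

lemma formallySmooth_of_charZero (K L : Type*) [Field K] [Field L] [Algebra K L] [CharZero K] :
    Algebra.FormallySmooth K L := by
  obtain ⟨s, hs⟩ := exists_isTranscendenceBasis K L
  have := hs.isAlgebraic_field
  exact .of_algebraicIndependent_of_isSeparable hs.1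

lemma formallySmooth_of_isDomain (A L : Type*) [CommRing A] [IsDomain A] [Field L] [Algebra A L]
    [FaithfulSMul A L] [CharZero L] : Algebra.FormallySmooth A L := by
  let : Algebra (FractionRing A) L := FractionRing.liftAlgebra A L
  have : CharZero (FractionRing A) :=
    (RingHom.charZero_iff (algebraMap (FractionRing A) L).injective).2 ‹_›
  have := formallySmooth_of_charZero (FractionRing A) L
  have : Algebra.FormallySmooth A (FractionRing A) := .of_isLocalization (nonZeroDivisors _)
  exact .comp _ (FractionRing A) _

lemma isNilpotent_ker_fstHom (K L : Type*) [CommRing K] [CommRing L] [Algebra K L] :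
    IsNilpotent (RingHom.ker (fstHom K L L)) := by
  refine ⟨2, ?_⟩
  rw [sq (RingHom.ker (fstHom K L L)), Ideal.zero_eq_bot, eq_bot_iff, Ideal.mul_le]
  intro a (ha : a.fst = 0) b (hb : b.fst = 0)
  exact Ideal.mem_bot.2 (TrivSqZeroExt.ext (by simp [ha]) (by simp [ha, hb]))

variable {K L σ : Type*} [Field L]

lemma exists_algHom_section {A B : Type*} [CommRing K] [CommRing A] [IsDomain A] [CommRing B]
    [Algebra K L] [Algebra K A] [Algebra K B] [Algebra A L] [IsScalarTower K A L]
    [FaithfulSMul A L] [CharZero L] (φ : A →ₐ[K] B) (π : B →ₐ[K] L) (hπ : Function.Surjective π)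
    (hker : IsNilpotent (RingHom.ker π)) (h : ∀ a, π (φ a) = algebraMap A L a) :
    ∃ ψ : L →ₐ[K] B, (∀ x, π (ψ x) = x) ∧ ∀ a, ψ (algebraMap A L a) = φ a := by
  have := formallySmooth_of_isDomain A L
  let : Algebra A B := φ.toRingHom.toAlgebra
  have : IsScalarTower K A B := .of_algebraMap_eq' φ.comp_algebraMap.symm
  let π' : B →ₐ[A] L := { π with commutes' := h }
  let ψ := Algebra.FormallySmooth.liftOfSurjective (AlgHom.id A L) π' hπ hker
  exact ⟨ψ.restrictScalars K,
    Algebra.FormallySmooth.liftOfSurjective_apply (AlgHom.id A L) π' hπ hker, ψ.commutes⟩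

lemma exists_derivation_of_algHom_dualNumber {A : Type*} [CommRing K] [CommRing A] [IsDomain A]
    [Algebra K L] [Algebra K A] [Algebra A L] [IsScalarTower K A L] [FaithfulSMul A L] [CharZero L]
    (φ : A →ₐ[K] TrivSqZeroExt L L) (hφ : ∀ a, (φ a).fst = algebraMap A L a) :
    ∃ D : Derivation K L L, ∀ a, D (algebraMap A L a) = (φ a).snd := by
  obtain ⟨ψ, hψ, hψφ⟩ := exists_algHom_section φ (fstHom K L L) (fun x => ⟨inl x, rfl⟩)
    (isNilpotent_ker_fstHom K L) hφ
  replace hψ : ∀ x, (ψ x).fst = x := hψ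
  refine ⟨Derivation.mk' (((sndHom L L).restrictScalars K).comp ψ.toLinearMap) fun a b => ?_,
    fun a => congrArg snd (hψφ a)⟩
  simp [hψ, mul_comm]

section
variable [Field K] [Algebra K L] [Fintype σ]

lemma aeval_inl_add_inr (x v : σ → L) (p : MvPolynomial σ K) :
    aeval (fun s => (inl (x s) + inr (v s) : TrivSqZeroExt L L)) p =
      inl (aeval x p) + inr (∑ s, aeval x (pderiv s p) * v s) := by
  classical
  induction p using MvPolynomial.induction_on with
  | C a => simp [algebraMap_eq_inl']
  | add p q hp hq =>
    rw [map_add, hp, hq]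
    simp only [map_add, inl_add, add_mul, Finset.sum_add_distrib, inr_add]
    ring
  | mul_X p i hp =>
    rw [map_mul, hp, aeval_X]
    ext
    · simp
    · simp only [Derivation.leibniz, pderiv_X, Pi.single_apply]
      simp [add_mul, mul_add, Finset.sum_add_distrib, Finset.mul_sum, mul_comm, mul_left_comm,
        apply_ite]

theorem exists_derivation_of_forall_aeval_eq_zero [CharZero L] (x v : σ → L)
    (h : ∀ p : MvPolynomial σ K, aeval x p = 0 → ∑ s, aeval x (pderiv s p) * v s = 0) :
    ∃ D : Derivation K L L, ∀ s, D (x s) = v s := by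
  let e : MvPolynomial σ K →ₐ[K] L := aeval x
  have : (RingHom.ker e).IsPrime := RingHom.ker_isPrime _
  let : Algebra (MvPolynomial σ K ⧸ RingHom.ker e) L := (Ideal.kerLiftAlg e).toAlgebra
  have : IsScalarTower K (MvPolynomial σ K ⧸ RingHom.ker e) L :=
    .of_algebraMap_eq' (Ideal.kerLiftAlg e).comp_algebraMap.symm
  have : FaithfulSMul (MvPolynomial σ K ⧸ RingHom.ker e) L :=
    (faithfulSMul_iff_algebraMap_injective _ _).2 (Ideal.kerLiftAlg_injective e)
  let φ : MvPolynomial σ K ⧸ RingHom.ker e →ₐ[K] TrivSqZeroExt L L :=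
    Ideal.Quotient.liftₐ _ (aeval fun s => inl (x s) + inr (v s)) fun p hp => by
      rw [aeval_inl_add_inr, show aeval x p = 0 from hp, h p hp, inl_zero, inr_zero, add_zero]
  obtain ⟨D, hD⟩ := exists_derivation_of_algHom_dualNumber φ fun a => by
    obtain ⟨p, rfl⟩ := Ideal.Quotient.mk_surjective a
    exact (congrArg fst (aeval_inl_add_inr x v p)).trans (add_zero (aeval x p))
  refine ⟨D, fun s => ?_⟩
  calc D (x s) = D (algebraMap _ L (Ideal.Quotient.mk (RingHom.ker e) (X s))) :=
        congrArg D (aeval_X x s).symm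
    _ = (φ (Ideal.Quotient.mk (RingHom.ker e) (X s))).snd := hD _
    _ = v s := (congrArg snd (aeval_X _ s)).trans (by simp)

end

lemma exists_derivation_of_algebraicIndependent [Field K] [Algebra K L] [Finite σ] [CharZero L]
    {x : σ → L} (hx : AlgebraicIndependent K x) (v : σ → L) :
    ∃ D : Derivation K L L, ∀ s, D (x s) = v s := by
  have := Fintype.ofFinite σ
  exact exists_derivation_of_forall_aeval_eq_zero x v fun p hp => by
    simp [(injective_iff_map_eq_zero _).1 hx p hp]

end ExtensionOfDerivations

section Constants

variable {K L : Type*} [Field K] [Field L] [Algebra K L]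

/-- The field of constants of a derivation. -/
def constants (D : Derivation K L L) : IntermediateField K L where
  carrier := {a | D a = 0}
  mul_mem' {a b} ha hb := by simp_all
  add_mem' {a b} ha hb := by simp_all
  algebraMap_mem' := D.map_algebraMap
  inv_mem' a ha := by simp_all [Derivation.leibniz_inv]

lemma mem_constants {D : Derivation K L L} {a : L} : a ∈ constants D ↔ D a = 0 := Iff.rfl

/-- A derivation, regarded as linear over its own field of constants. -/
def overConstants (D : Derivation K L L) : Derivation (constants D) L L :=
  Derivation.mk'
    { toFun := D
      map_add' := D.map_add
      map_smul' := fun c a => by simp [Algebra.smul_def, mem_constants.1 c.2] }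
    D.leibniz

variable [CharZero L]

lemma eq_zero_of_isAlgebraic_constants {D : Derivation K L L} {a : L}
    (ha : IsAlgebraic (constants D) a) : D a = 0 := by
  have h : overConstants D (Polynomial.aeval a (minpoly (constants D) a)) = 0 := by simp
  rw [Derivation.map_aeval, smul_eq_mul, mul_eq_zero] at h
  exact h.resolve_left <| (minpoly.irreducible ha.isIntegral).separable.aeval_derivative_ne_zero
    (minpoly.aeval _ a)

lemma eq_zero_of_isAlgebraic {D : Derivation K L L} {A : Subalgebra K L}
    (hA : A ≤ (constants D).toSubalgebra) {a : L} (ha : IsAlgebraic A a) : D a = 0 :=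
  eq_zero_of_isAlgebraic_constants (ha.tower_top_of_subalgebra_le hA)

lemma derivation_algEquiv_apply {S : Set L} {E : Derivation K L L}
    (hE : ∀ s ∈ S, E s ∈ IntermediateField.adjoin K S)
    [Algebra.IsAlgebraic (IntermediateField.adjoin K S) L]
    (σ : L ≃ₐ[IntermediateField.adjoin K S] L) (x : L) : E (σ x) = σ (E x) := by
  let F := IntermediateField.adjoin K S
  let σ' := σ.restrictScalars K
  let D : Derivation K L L := Derivation.mk'
    (σ'.symm.toLinearMap ∘ₗ E.toLinearMap ∘ₗ σ'.toLinearMap - E.toLinearMap) fun a b => by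
      simp only [LinearMap.sub_apply, LinearMap.comp_apply, AlgEquiv.toLinearMap_apply,
        Derivation.coeFn_coe, map_mul, Derivation.leibniz, smul_eq_mul, map_add,
        AlgEquiv.symm_apply_apply]
      ring
  have hD (a : L) : D a = σ.symm (E (σ a)) - E a := rfl
  have hF : F ≤ constants D := IntermediateField.adjoin_le_iff.2 fun s hs => by
    have hσs : σ s = s := σ.commutes ⟨s, IntermediateField.subset_adjoin K S hs⟩
    have hσE : σ.symm (E s) = E s := σ.symm.commutes ⟨E s, hE s hs⟩
    exact mem_constants.2 (by rw [hD, hσs, hσE, sub_self])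
  have hx : D x = 0 := eq_zero_of_isAlgebraic hF (Algebra.IsAlgebraic.isAlgebraic (R := F) x)
  rwa [hD, sub_eq_zero, AlgEquiv.symm_apply_eq] at hx

end Constants

section EulerDerivation

open Polynomial

variable {M L : Type*} [Field M] [Field L] [Algebra M L] {t : L}

/-- The elements `p(t) / q(t)` with `p(0) = 0` and `q(0) ≠ 0`: for `t` transcendental over `M`, the
maximal ideal of the local ring of `M(t)` at `t = 0`. -/
def vanishingAtZero (M : Type*) {L : Type*} [Field M] [Field L] [Algebra M L] (t : L) :
    Submodule M L where
  carrier := {x | ∃ p q : M[X], p.eval 0 = 0 ∧ q.eval 0 ≠ 0 ∧ x * aeval t q = aeval t p}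
  add_mem' := by
    rintro x y ⟨p, q, hp, hq, hx⟩ ⟨p', q', hp', hq', hy⟩
    refine ⟨p * q' + p' * q, q * q', by simp [hp, hp'], by simp [hq, hq'], ?_⟩
    simp only [map_add, map_mul]
    linear_combination aeval t q' * hx + aeval t q * hy
  zero_mem' := ⟨0, 1, by simp⟩
  smul_mem' := by
    rintro c x ⟨p, q, hp, hq, hx⟩
    exact ⟨c • p, q, by simp [hp], hq, by rw [map_smul, ← hx, smul_mul_assoc]⟩

lemma aeval_ne_zero_of_eval_ne_zero (ht : Transcendental M t) {q : M[X]} {a : M}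
    (hq : q.eval a ≠ 0) : aeval t q ≠ 0 :=
  transcendental_iff.1 ht q |>.mt fun h => hq (by simp [h])

lemma ne_zero_of_transcendental (ht : Transcendental M t) : t ≠ 0 := by
  rintro rfl
  exact ht isAlgebraic_zero

lemma eq_zero_of_algebraMap_mem_vanishingAtZero (ht : Transcendental M t) {a : M}
    (ha : algebraMap M L a ∈ vanishingAtZero M t) : a = 0 := by
  obtain ⟨p, q, hp, hq, h⟩ := ha
  have hpq : C a * q = p := transcendental_iff_injective.1 ht (by simpa using h)
  simpa [hp, hq] using congrArg (eval 0) hpq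

lemma exists_eq_zpow_mul_aeval_div_aeval (ht : Transcendental M t) {x : L}
    (hx : x ∈ IntermediateField.adjoin M {t}) (hx0 : x ≠ 0) :
    ∃ (m : ℤ) (p q : M[X]), p.eval 0 ≠ 0 ∧ q.eval 0 ≠ 0 ∧
      x = t ^ m * (aeval t p / aeval t q) := by
  have factor_X (r : M[X]) (hr : r ≠ 0) : ∃ (n : ℕ) (p : M[X]), p.eval 0 ≠ 0 ∧ r = X ^ n * p := by
    obtain ⟨p, hp, hXp⟩ := exists_eq_pow_rootMultiplicity_mul_and_not_dvd r hr 0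
    exact ⟨_, p, by simpa [X_dvd_iff, coeff_zero_eq_eval_zero] using hXp, by simpa using hp⟩
  obtain ⟨r, s, rfl⟩ := (IntermediateField.mem_adjoin_simple_iff M x).1 hx
  obtain ⟨m, p, hp, rfl⟩ := factor_X r (by rintro rfl; simp at hx0)
  obtain ⟨n, q, hq, rfl⟩ := factor_X s (by rintro rfl; simp at hx0)
  refine ⟨m - n, p, q, hp, hq, ?_⟩
  simp [zpow_sub₀ (ne_zero_of_transcendental ht), mul_div_mul_comm]

-- `θ` is the Euler derivation `t * d/dt` of `M(t)`, extended to `L`.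
variable {θ : Derivation M L L}

lemma euler_zpow (ht : t ≠ 0) (hθ : θ t = t) (m : ℤ) : θ (t ^ m) = m * t ^ m := by
  rw [Derivation.leibniz_zpow, hθ, smul_eq_mul, ← zpow_add_one₀ ht, sub_add_cancel, zsmul_eq_mul]

lemma euler_aeval (hθ : θ t = t) (p : M[X]) : θ (aeval t p) = aeval t (X * derivative p) := by
  rw [Derivation.map_aeval, hθ, smul_eq_mul, map_mul, aeval_X, mul_comm]

lemma euler_aeval_div_mem_vanishingAtZero (ht : Transcendental M t) (hθ : θ t = t) {p : M[X]}
    (hp : p.eval 0 ≠ 0) : θ (aeval t p) / aeval t p ∈ vanishingAtZero M t :=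
  ⟨X * derivative p, p, by simp, hp, by
    rw [euler_aeval hθ, div_mul_cancel₀ _ (aeval_ne_zero_of_eval_ne_zero ht hp)]⟩

lemma exists_int_euler_div_sub_mem_vanishingAtZero (ht : Transcendental M t) (hθ : θ t = t) {x : L}
    (hx : x ∈ IntermediateField.adjoin M {t}) (hx0 : x ≠ 0) :
    ∃ m : ℤ, θ x / x - m ∈ vanishingAtZero M t := by
  obtain ⟨m, p, q, hp, hq, rfl⟩ := exists_eq_zpow_mul_aeval_div_aeval ht hx hx0
  have ht0 := ne_zero_of_transcendental ht
  have hp0 := aeval_ne_zero_of_eval_ne_zero ht hp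
  have hq0 := aeval_ne_zero_of_eval_ne_zero ht hq
  have htm := zpow_ne_zero m ht0
  have h : θ (t ^ m * (aeval t p / aeval t q)) / (t ^ m * (aeval t p / aeval t q)) - m =
      θ (aeval t p) / aeval t p - θ (aeval t q) / aeval t q := by
    rw [Derivation.leibniz, Derivation.leibniz_div, euler_zpow ht0 hθ]
    simp only [smul_eq_mul]
    field_simp
    ring
  exact ⟨m, h ▸ sub_mem (euler_aeval_div_mem_vanishingAtZero ht hθ hp)
    (euler_aeval_div_mem_vanishingAtZero ht hθ hq)⟩

lemma euler_zpow_mul_aeval_div_aeval (ht : t ≠ 0) (hθ : θ t = t) (m : ℤ) (p : M[X]) {q : M[X]}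
    (hq : aeval t q ≠ 0) :
    θ (t ^ m * (aeval t p / aeval t q)) =
      t ^ m * aeval t (C (m : M) * p * q + X * (derivative p * q - p * derivative q)) /
        aeval t q ^ 2 := by
  rw [Derivation.leibniz, Derivation.leibniz_div, euler_zpow ht hθ, euler_aeval hθ, euler_aeval hθ]
  simp only [smul_eq_mul, map_add, map_sub, map_mul, aeval_X, map_intCast]
  field_simp
  ring

lemma eq_zero_of_euler_sub_mem_vanishingAtZero [CharZero M] (ht : Transcendental M t)
    (hθ : θ t = t) {x : L} (hx : x ∈ IntermediateField.adjoin M {t}) {a : M}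
    (h : θ x - algebraMap M L a ∈ vanishingAtZero M t) : a = 0 := by
  obtain rfl | hx0 := eq_or_ne x 0
  · exact eq_zero_of_algebraMap_mem_vanishingAtZero ht (by simpa using neg_mem h)
  obtain ⟨m, p, q, hp, hq, rfl⟩ := exists_eq_zpow_mul_aeval_div_aeval ht hx hx0
  obtain ⟨P, Q, hP, hQ, h⟩ := h
  have ht0 := ne_zero_of_transcendental ht
  have hq0 := aeval_ne_zero_of_eval_ne_zero ht hq
  rw [euler_zpow_mul_aeval_div_aeval ht0 hθ m p hq0] at h
  set N := C (m : M) * p * q + X * (derivative p * q - p * derivative q) with hN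
  have hN0 : N.eval 0 = m * p.eval 0 * q.eval 0 := by simp [hN]
  have hinj := transcendental_iff_injective.1 ht
  obtain ⟨n, rfl | rfl⟩ := m.eq_nat_or_neg
  · have key : (X ^ n * N - C a * q ^ 2) * Q = P * q ^ 2 := hinj <| by
      rw [zpow_natCast] at h
      simp only [map_sub, map_mul, map_pow, aeval_X, aeval_C]
      field_simp at h
      linear_combination h
    have hXN : (0 : M) ^ n * N.eval 0 = 0 := by cases n <;> simp [hN0]
    simpa [hXN, hP, hQ, hq] using congrArg (eval 0) key
  · have key : (N - X ^ n * C a * q ^ 2) * Q = X ^ n * P * q ^ 2 := hinj <| by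
      rw [zpow_neg, zpow_natCast] at h
      simp only [map_sub, map_mul, map_pow, aeval_X, aeval_C]
      field_simp at h
      linear_combination h
    cases n with
    | zero => simpa [hN0, hP, hQ, hq] using congrArg (eval 0) key
    | succ n =>
      have hn : -1 + -(n : M) = 0 := by simpa [hN0, hp, hQ, hq] using congrArg (eval 0) key
      exact absurd (by linear_combination -hn) (n.cast_add_one_ne_zero (R := M))

end EulerDerivation

section Galois

lemma exists_finset_algEquiv_sum_mem_prod_mem {R L : Type*} [Field R] [Field L] [Algebra R L]
    [IsGalois R L] {S : Set L} (hS : S.Finite) :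
    ∃ G : Finset (L ≃ₐ[R] L), G.Nonempty ∧
      ∀ x ∈ S, ∑ σ ∈ G, σ x ∈ (algebraMap R L).range ∧ ∏ σ ∈ G, σ x ∈ (algebraMap R L).range := by
  classical
  have := hS.to_subtype
  let F := FiniteGaloisIntermediateField.adjoin R S
  let lift (τ : Gal(F/R)) : L ≃ₐ[R] L := τ.liftNormal L
  have lift_apply (τ : Gal(F/R)) (x : F) : lift τ x = τ x := τ.liftNormal_commutes L x
  have lift_injective : Function.Injective lift := fun τ τ' h =>
    AlgEquiv.ext fun x => Subtype.ext (by rw [← lift_apply, h, lift_apply])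
  refine ⟨Finset.univ.image lift, Finset.univ_nonempty.image _, fun x hx => ?_⟩
  let x' : F := ⟨x, FiniteGaloisIntermediateField.subset_adjoin R S hx⟩
  rw [Finset.sum_image lift_injective.injOn, Finset.prod_image lift_injective.injOn]
  constructor
  · refine ⟨Algebra.trace R F x', ?_⟩
    rw [IsScalarTower.algebraMap_apply R F L, trace_eq_sum_automorphisms, map_sum]
    exact Finset.sum_congr rfl fun τ _ => (lift_apply τ x').symm
  · refine ⟨Algebra.norm R x', ?_⟩
    rw [IsScalarTower.algebraMap_apply R F L, Algebra.norm_eq_prod_automorphisms, map_prod]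
    exact Finset.prod_congr rfl fun τ _ => (lift_apply τ x').symm

end Galois

section LogarithmicDerivative

variable {K L ι : Type*} [Field K] [Field L] [Algebra K L]

lemma derivation_prod_div_prod (E : Derivation K L L) (s : Finset ι) {f : ι → L}
    (hf : ∀ i ∈ s, f i ≠ 0) :
    E (∏ i ∈ s, f i) / ∏ i ∈ s, f i = ∑ i ∈ s, E (f i) / f i := by
  let : Differential L := ⟨E.restrictScalars ℤ⟩
  exact Differential.logDeriv_prod ι s f hf

lemma derivation_zpow_div_zpow (E : Derivation K L L) {z : L} (hz : z ≠ 0) (n : ℤ) :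
    E (z ^ n) / z ^ n = n * (E z / z) := by
  have := zpow_ne_zero n hz
  rw [Derivation.leibniz_zpow, zpow_sub_one₀ hz, zsmul_eq_mul, smul_eq_mul]
  field_simp

lemma derivation_prod_zpow_div_prod_zpow [Fintype ι] (E : Derivation K L L) {z : ι → L}
    (hz : ∀ i, z i ≠ 0) (n : ι → ℤ) :
    E (∏ i, z i ^ n i) / ∏ i, z i ^ n i = ∑ i, n i * (E (z i) / z i) := by
  rw [derivation_prod_div_prod E _ fun i _ => zpow_ne_zero _ (hz i)]
  exact Finset.sum_congr rfl fun i _ => derivation_zpow_div_zpow E (hz i) _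

lemma derivation_sum_algEquiv [Fintype ι] {R : Type*} [Field R] [Algebra R L]
    {E : Derivation K L L} {G : Finset (L ≃ₐ[R] L)} (hG : ∀ σ ∈ G, ∀ x, E (σ x) = σ (E x))
    (b : ι → R) {u : L} {w : ι → L} (hw : ∀ j, w j ≠ 0)
    (hu : E u = ∑ j, algebraMap R L (b j) * (E (w j) / w j)) :
    E (∑ σ ∈ G, σ u) =
      ∑ j, algebraMap R L (b j) * (E (∏ σ ∈ G, σ (w j)) / ∏ σ ∈ G, σ (w j)) :=
  calc E (∑ σ ∈ G, σ u) = ∑ σ ∈ G, σ (E u) := by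
        rw [map_sum]
        exact Finset.sum_congr rfl fun σ hσ => hG σ hσ u
    _ = ∑ σ ∈ G, ∑ j, algebraMap R L (b j) * (E (σ (w j)) / σ (w j)) :=
        Finset.sum_congr rfl fun σ hσ => by simp [hu, hG σ hσ]
    _ = ∑ j, algebraMap R L (b j) * ∑ σ ∈ G, E (σ (w j)) / σ (w j) := by
        rw [Finset.sum_comm]
        simp only [Finset.mul_sum]
    _ = ∑ j, algebraMap R L (b j) * (E (∏ σ ∈ G, σ (w j)) / ∏ σ ∈ G, σ (w j)) := by
        simp only [derivation_prod_div_prod E G fun σ _ => (map_ne_zero σ).2 (hw _)]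

end LogarithmicDerivative

section Rosenlicht

open IntermediateField

variable {K L : Type*} [Field K] [Field L] [Algebra K L]

lemma transcendental_adjoin_diff_singleton {s : Set L} (hs : AlgebraicIndepOn K id s) {t : L}
    (ht : t ∈ s) : Transcendental (adjoin K (s \ {t})) t := by
  have hs' : AlgebraicIndepOn K id (insert t (s \ {t})) := by simpa [ht] using hs
  have h := ((AlgebraicIndepOn.insert_iff (by simp)).1 hs').2
  rw [Set.image_id] at h
  intro hc
  open scoped algebraAdjoinAdjoin in
  exact h ((IsFractionRing.isAlgebraic_iff (Algebra.adjoin K (s \ {t}))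
    (adjoin K (s \ {t})) L).2 hc)

lemma isAlgebraic_adjoin_adjoin_diff_singleton {s : Set L}
    (hs : IsTranscendenceBasis K ((↑) : s → L)) (t : L) :
    Algebra.IsAlgebraic (adjoin (adjoin K (s \ {t})) {t}) L := by
  let F := (adjoin (adjoin K (s \ {t})) {t}).restrictScalars K
  have adjoin_le : adjoin K (Set.range ((↑) : s → L)) ≤ F := by
    rw [Subtype.range_coe, adjoin_le_iff]
    intro x hx
    by_cases hxt : x = t
    · exact hxt ▸ mem_adjoin_simple_self (adjoin K (s \ {t})) x
    · exact (adjoin (adjoin K (s \ {t})) {t}).algebraMap_mem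
        ⟨x, subset_adjoin K (s \ {t}) ⟨hx, hxt⟩⟩
  have := hs.isAlgebraic_field
  refine ⟨fun a => ?_⟩
  have ha : IsAlgebraic (adjoin K (Set.range ((↑) : s → L))).toSubalgebra a :=
    Algebra.IsAlgebraic.isAlgebraic (R := adjoin K (Set.range ((↑) : s → L))) a
  exact ha.tower_top_of_subalgebra_le (B := F.toSubalgebra) adjoin_le

lemma exists_transcendental_isAlgebraic_adjoin {t : L} (ht : Transcendental K t) :
    ∃ M : IntermediateField K L, Transcendental M t ∧ Algebra.IsAlgebraic (adjoin M {t}) L := by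
  have hind : AlgebraicIndepOn K id {t} :=
    algebraicIndependent_unique_type_iff (x := fun i : ({t} : Set L) => (i : L)) |>.2 ht
  obtain ⟨s, hts, hs⟩ := exists_isTranscendenceBasis_superset hind
  exact ⟨adjoin K (s \ {t}), transcendental_adjoin_diff_singleton hs.1 (hts rfl),
    isAlgebraic_adjoin_adjoin_diff_singleton hs t⟩

variable {M ι : Type*} [Field M] [Algebra M L] [CharZero L] [IsAlgClosed L] [Fintype ι] {t u : L}
  {w : ι → L}

-- After averaging over a finite Galois group the identity lives in `M(t)`, where its two sides have
-- residues `0` and `∑ j, ord (w j) * b j` at `t = 0`.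
lemma ne_of_euler_eq_sum_logDeriv (ht : Transcendental M t)
    [Algebra.IsAlgebraic (adjoin M {t}) L] {θ : Derivation M L L} (hθ : θ t = t) {b : ι → M}
    (hb : LinearIndependent ℤ b) (hw : ∀ j, w j ≠ 0)
    (hu : θ u = ∑ j, algebraMap M L (b j) * (θ (w j) / w j)) (j : ι) : w j ≠ t := by
  intro hj
  let R := adjoin M {t}
  have : CharZero M := (RingHom.charZero_iff (algebraMap M L).injective).2 ‹_›
  have : IsAlgClosure R L := ⟨inferInstance, inferInstance⟩
  have : IsGalois R L := {}
  have mem_R {x : L} (hx : x ∈ (algebraMap R L).range) : x ∈ R := by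
    obtain ⟨r, rfl⟩ := hx
    exact r.2
  obtain ⟨G, hGne, hG⟩ := exists_finset_algEquiv_sum_mem_prod_mem (R := R)
    ((Set.finite_range w).insert u)
  have hsum := derivation_sum_algEquiv (G := G)
    (fun σ _ => derivation_algEquiv_apply (fun s hs => by
      rw [Set.mem_singleton_iff.1 hs, hθ]; exact mem_adjoin_simple_self M t) σ)
    (fun j => algebraMap M R (b j)) hw hu
  choose m hm using fun j => exists_int_euler_div_sub_mem_vanishingAtZero ht hθ
    (mem_R (hG (w j) (Or.inr ⟨j, rfl⟩)).2)
    (Finset.prod_ne_zero_iff.2 fun σ _ => (map_ne_zero σ).2 (hw j))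
  have residue_eq_zero : ∑ i, (m i : M) * b i = 0 := by
    refine eq_zero_of_euler_sub_mem_vanishingAtZero ht hθ (mem_R (hG u (Or.inl rfl)).1) ?_
    rw [hsum, map_sum, ← Finset.sum_sub_distrib]
    refine sum_mem fun i _ => ?_
    convert (vanishingAtZero M t).smul_mem (b i) (hm i) using 1
    rw [Algebra.smul_def, map_mul, map_intCast, ← IsScalarTower.algebraMap_apply]
    ring
  have hmj : (m j : M) = G.card := by
    have hσt (σ : L ≃ₐ[R] L) : σ t = t := σ.commutes ⟨t, mem_adjoin_simple_self M t⟩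
    have hlog : θ (∏ σ ∈ G, σ (w j)) / ∏ σ ∈ G, σ (w j) = G.card := by
      rw [derivation_prod_div_prod θ G fun σ _ => (map_ne_zero σ).2 (hw j)]
      simp [hj, hσt, hθ, ne_zero_of_transcendental ht]
    refine (sub_eq_zero.1 (eq_zero_of_algebraMap_mem_vanishingAtZero ht ?_)).symm
    simpa [hlog] using hm j
  have hm0 : m j = 0 :=
    Fintype.linearIndependent_iff.1 hb m (by simpa [zsmul_eq_mul] using residue_eq_zero) j
  exact hGne.card_pos.ne' (by exact_mod_cast (hmj.symm.trans (by simp [hm0]) : (G.card : M) = 0))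

theorem isAlgebraic_of_forall_derivation_eq_sum_logDeriv {b : ι → K}
    (hb : LinearIndependent ℤ b) (hw : ∀ j, w j ≠ 0)
    (hu : ∀ E : Derivation K L L, E u = ∑ j, algebraMap K L (b j) * (E (w j) / w j)) (j : ι) :
    IsAlgebraic K (w j) := by
  by_contra hj
  obtain ⟨M, hMj, _⟩ := exists_transcendental_isAlgebraic_adjoin hj
  obtain ⟨θ, hθ⟩ := exists_derivation_of_algebraicIndependent
    (algebraicIndependent_unique_type_iff (x := fun _ : Unit => w j) |>.2 hMj) fun _ => w j
  exact ne_of_euler_eq_sum_logDeriv hMj (hθ ()) (b := fun i => algebraMap K M (b i))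
    (hb.map' (Algebra.linearMap K M |>.restrictScalars ℤ)
      (LinearMap.ker_eq_bot.2 (algebraMap K M).injective)) hw (hu (θ.restrictScalars K)) j rfl

end Rosenlicht

section Ax

lemma exists_linearIndependent_eq_sum_smul {R A ι : Type*} [CommRing R] [IsDomain R]
    [IsPrincipalIdealRing R] [AddCommGroup A] [Module R A] [Module.IsTorsionFree R A] [Finite ι]
    (f : ι → A) :
    ∃ (m : ℕ) (b : Fin m → A) (n : ι → Fin m → R),
      LinearIndependent R b ∧ ∀ i, f i = ∑ j, n i j • b j := by
  let S := Submodule.span R (Set.range f)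
  have : Module.Finite R S := .span_of_finite R (Set.finite_range f)
  let b := Module.finBasis R S
  let f' (i : ι) : S := ⟨f i, Submodule.subset_span ⟨i, rfl⟩⟩
  refine ⟨_, S.subtype ∘ b, fun i => b.repr (f' i), b.linearIndependent.map' _ S.ker_subtype,
    fun i => ?_⟩
  calc f i = S.subtype (∑ j, b.repr (f' i) j • b j) := congrArg S.subtype (b.sum_repr (f' i)).symm
    _ = ∑ j, b.repr (f' i) j • (S.subtype ∘ b) j := by simp only [map_sum, map_smul, Function.comp]

lemma range_ne_top_of_ker_le_ker {L V ι κ : Type*} [Field L] [AddCommGroup V] [Module L V]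
    [Fintype ι] [Fintype κ] (hcard : Fintype.card κ ≤ Fintype.card ι) {τ : V →ₗ[L] κ → L}
    {ω : V →ₗ[L] ι → L} (h : LinearMap.ker τ ≤ LinearMap.ker ω) {v : V} (hτ : τ v ≠ 0)
    (hω : ω v = 0) : LinearMap.range ω ≠ ⊤ := by
  intro htop
  let g := (LinearMap.ker τ).liftQ ω h
  have := Module.Finite.equiv τ.quotKerEquivRange.symm
  have rank_domain : Module.finrank L (V ⧸ LinearMap.ker τ) ≤ Fintype.card κ := by
    rw [τ.quotKerEquivRange.finrank_eq, ← Module.finrank_fintype_fun_eq_card L]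
    exact Submodule.finrank_le _
  have rank_range : Module.finrank L (LinearMap.range g) = Fintype.card ι := by
    rw [Submodule.range_liftQ, htop, finrank_top, Module.finrank_fintype_fun_eq_card]
  have ker_eq_bot : LinearMap.ker g = ⊥ := by
    rw [← Submodule.finrank_eq_zero]
    have := g.finrank_range_add_finrank_ker
    lia
  have hv : Submodule.Quotient.mk v ∈ LinearMap.ker g := hω
  rw [ker_eq_bot, Submodule.mem_bot, Submodule.Quotient.mk_eq_zero] at hv
  exact hτ hv

variable {K L ι : Type*} [Field K] [Field L] [Algebra K L]

-- Take a vector of minimal support and scale one entry to `1`: its derivative has smaller support.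
lemma exists_ne_zero_forall_eq_zero_of_stable [Finite ι] (D : Derivation K L L)
    {W : Submodule L (ι → L)} (hW : W ≠ ⊥) (hD : ∀ f ∈ W, (fun i => D (f i)) ∈ W) :
    ∃ f ∈ W, f ≠ 0 ∧ ∀ i, D (f i) = 0 := by
  obtain ⟨f, ⟨hf, hf0⟩, hmin⟩ := WellFounded.has_min (measure fun f : ι → L => f.support.ncard).wf
    {f | f ∈ W ∧ f ≠ 0} (W.ne_bot_iff.1 hW)
  obtain ⟨i₀, hi₀⟩ := Function.ne_iff.1 hf0
  let g := (f i₀)⁻¹ • f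
  have hg : g ∈ W := W.smul_mem _ hf
  have hgi₀ : g i₀ = 1 := inv_mul_cancel₀ hi₀
  refine ⟨g, hg, fun h => by simp [h] at hgi₀, ?_⟩
  by_contra! hne
  obtain ⟨i, hi⟩ := hne
  refine hmin (fun i => D (g i)) ⟨hD g hg, Function.ne_iff.2 ⟨i, hi⟩⟩
    (Set.ncard_lt_ncard (Set.ssubset_iff_exists.2 ⟨fun i h hfi => h ?_, i₀, hi₀, ?_⟩))
  · simp [g, hfi]
  · simp [hgi₀]

lemma eq_zero_of_mem_closure [CharZero L] {D : Derivation K L L} {T : Set L}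
    (hT : ∀ t ∈ T, D t = 0) {a : L}
    (ha : a ∈ (AlgebraicIndependent.matroid K L).closure T) : D a = 0 := by
  rw [AlgebraicIndependent.matroid_closure_eq, SetLike.mem_coe,
    Subalgebra.mem_algebraicClosure] at ha
  exact eq_zero_of_isAlgebraic (Algebra.adjoin_le hT) ha

/-- The differential forms `dzᵢ / zᵢ - dyᵢ`, as functions of a derivation. -/
def axForm (K : Type*) [Field K] [Algebra K L] (y z : ι → L) : Derivation K L L →ₗ[L] ι → L where
  toFun E i := E (z i) / z i - E (y i)
  map_add' E E' := by ext i; simp only [Derivation.add_apply, Pi.add_apply]; ring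
  map_smul' c E := by ext i; simp [mul_sub, mul_div_assoc]

variable {y z : ι → L}

lemma axForm_apply (E : Derivation K L L) (i : ι) : axForm K y z E i = E (z i) / z i - E (y i) :=
  rfl

lemma axForm_eq_zero {D : Derivation K L L} (hz : ∀ i, z i ≠ 0)
    (hD : ∀ i, D (z i) = z i * D (y i)) : axForm K y z D = 0 := by
  ext i
  simp [axForm_apply, hD, hz]

lemma axForm_commutator {D : Derivation K L L} (hz : ∀ i, z i ≠ 0)
    (hD : ∀ i, D (z i) = z i * D (y i)) (E : Derivation K L L) (i : ι) :
    axForm K y z ⁅D, E⁆ i = D (axForm K y z E i) := by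
  have := hz i
  simp only [axForm_apply, Derivation.commutator_apply, hD, map_sub, Derivation.leibniz,
    Derivation.leibniz_div, smul_eq_mul]
  field_simp
  ring

variable [Fintype ι]

/-- The `L`-linear relations among the forms `dzᵢ / zᵢ - dyᵢ`. -/
def axRelations (K : Type*) [Field K] [Algebra K L] (y z : ι → L) : Submodule L (ι → L) where
  carrier := {f | ∀ E, f ⬝ᵥ axForm K y z E = 0}
  add_mem' hf hg E := by rw [add_dotProduct, hf E, hg E, add_zero]
  zero_mem' E := zero_dotProduct _
  smul_mem' c f hf E := by rw [smul_dotProduct, hf E, smul_zero]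

lemma axRelations_ne_bot (h : LinearMap.range (axForm K y z) ≠ ⊤) : axRelations K y z ≠ ⊥ := by
  classical
  obtain ⟨φ, hφ, hle⟩ := Submodule.exists_le_ker_of_lt_top _ h.lt_top
  refine (axRelations K y z).ne_bot_iff.2 ⟨fun i => φ (Pi.single i 1), fun E => ?_, fun h0 => ?_⟩
  · calc (fun i => φ (Pi.single i 1)) ⬝ᵥ axForm K y z E
        = φ (∑ i, axForm K y z E i • Pi.single i 1) := by simp [dotProduct, mul_comm]
      _ = φ (axForm K y z E) := by rw [← pi_eq_sum_univ']
      _ = 0 := hle ⟨E, rfl⟩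
  · exact hφ (LinearMap.pi_ext' fun i => LinearMap.ext_ring (congrFun h0 i))

lemma derivation_mem_axRelations {D : Derivation K L L} (hz : ∀ i, z i ≠ 0)
    (hD : ∀ i, D (z i) = z i * D (y i)) {f : ι → L} (hf : f ∈ axRelations K y z) :
    (fun i => D (f i)) ∈ axRelations K y z := by
  intro E
  have h := congrArg D (hf E)
  have hcomm := hf ⁅D, E⁆
  simp only [dotProduct, axForm_commutator hz hD] at h hcomm ⊢
  simp only [map_sum, Derivation.leibniz, smul_eq_mul, Finset.sum_add_distrib, hcomm, map_zero,
    zero_add] at h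
  simpa only [mul_comm] using h

-- Expanding the coefficients `f i` in a `ℤ`-basis `b` of the group they generate turns the relation
-- into `d(∑ i, f i * y i) = ∑ j, b j * dw j / w j` with `w j` a monomial in the `z i`, so that
-- Rosenlicht's lemma makes each `w j` algebraic over the constants.
lemma eq_zero_of_algebraMap_mem_axRelations [CharZero L] [IsAlgClosed L] {D : Derivation K L L}
    (hz : ∀ i, z i ≠ 0) (hD : ∀ i, D (z i) = z i * D (y i))
    (hind : LinearIndependent ℤ fun i => D (y i)) {f : ι → K}
    (hf : (fun i => algebraMap K L (f i)) ∈ axRelations K y z) : f = 0 := by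
  have : CharZero K := (RingHom.charZero_iff (algebraMap K L).injective).2 ‹_›
  obtain ⟨m, b, n, hb, hfb⟩ := exists_linearIndependent_eq_sum_smul (R := ℤ) f
  let w (j : Fin m) : L := ∏ i, z i ^ n i j
  have hw (j : Fin m) : w j ≠ 0 := Finset.prod_ne_zero_iff.2 fun i _ => zpow_ne_zero _ (hz i)
  have logDeriv_w (E : Derivation K L L) (j : Fin m) :
      E (w j) / w j = ∑ i, n i j * (E (z i) / z i) :=
    derivation_prod_zpow_div_prod_zpow E hz _
  have hu (E : Derivation K L L) : E (∑ i, algebraMap K L (f i) * y i) =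
      ∑ j, algebraMap K L (b j) * (E (w j) / w j) :=
    calc E (∑ i, algebraMap K L (f i) * y i) = ∑ i, algebraMap K L (f i) * E (y i) := by simp
      _ = ∑ i, algebraMap K L (f i) * (E (z i) / z i) := by
        have := hf E
        simp only [dotProduct, axForm_apply, mul_sub, Finset.sum_sub_distrib] at this
        exact (sub_eq_zero.1 this).symm
      _ = ∑ j, algebraMap K L (b j) * (E (w j) / w j) := by
        simp only [logDeriv_w, hfb, map_sum, zsmul_eq_mul, map_mul, map_intCast, Finset.sum_mul,
          Finset.mul_sum]
        rw [Finset.sum_comm]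
        exact Finset.sum_congr rfl fun _ _ => Finset.sum_congr rfl fun _ _ => by ring
  have hn (j : Fin m) (i : ι) : n i j = 0 := by
    have hwj := isAlgebraic_of_forall_derivation_eq_sum_logDeriv hb hw hu j
    have hDw := logDeriv_w D j
    rw [eq_zero_of_isAlgebraic_constants (hwj.tower_top (constants D)), zero_div] at hDw
    refine Fintype.linearIndependent_iff.1 hind (fun i => n i j) ?_ i
    simpa [hD, hz] using hDw.symm
  ext i
  simp [hfb, hn]

theorem card_lt_eRk_constants [Nonempty ι] [CharZero L] [IsAlgClosed L] {D : Derivation K L L}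
    (hz : ∀ i, z i ≠ 0) (hD : ∀ i, D (z i) = z i * D (y i))
    (hind : LinearIndependent ℤ fun i => D (y i)) :
    Fintype.card ι <
      (AlgebraicIndependent.matroid (constants D) L).eRk (Set.range y ∪ Set.range z) := by
  by_contra! hle
  let M := AlgebraicIndependent.matroid (constants D) L
  obtain ⟨T, hT⟩ := M.exists_isBasis (Set.range y ∪ Set.range z) (Set.subset_univ _)
  rw [← hT.encard_eq_eRk] at hle
  have := (Set.finite_of_encard_le_coe hle).fintype
  have hcard : Fintype.card T ≤ Fintype.card ι := by
    rw [Set.encard_eq_coe_toFinset_card, Set.toFinset_card] at hle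
    exact_mod_cast hle
  let τ : Derivation (constants D) L L →ₗ[L] T → L :=
    { toFun E t := E t, map_add' _ _ := rfl, map_smul' _ _ := rfl }
  have vanish (E) (hE : τ E = 0) (a) (ha : a ∈ Set.range y ∪ Set.range z) : E a = 0 :=
    eq_zero_of_mem_closure (fun t ht => congrFun hE ⟨t, ht⟩) (hT.subset_closure ha)
  have ker_le : LinearMap.ker τ ≤ LinearMap.ker (axForm (constants D) y z) := fun E hE => by
    ext i
    simp [axForm_apply, vanish E hE _ (Or.inl ⟨i, rfl⟩), vanish E hE _ (Or.inr ⟨i, rfl⟩)]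
  have hτD : τ (overConstants D) ≠ 0 := fun h =>
    hind.ne_zero (Classical.arbitrary ι) (vanish _ h _ (Or.inl ⟨_, rfl⟩))
  have hne := axRelations_ne_bot
    (range_ne_top_of_ker_le_ker hcard ker_le hτD (axForm_eq_zero hz hD))
  obtain ⟨f, hf, hf0, hfD⟩ := exists_ne_zero_forall_eq_zero_of_stable (overConstants D) hne
    fun _ => derivation_mem_axRelations (D := overConstants D) hz hD
  have := eq_zero_of_algebraMap_mem_axRelations (f := fun i => (⟨f i, hfD i⟩ : constants D))
    (D := overConstants D) hz hD hind hf
  exact hf0 (funext fun i => congrArg Subtype.val (congrFun this i))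

end Ax

section TranscendenceRank

open AlgebraicIndependent

lemma eRk_add_eRk_le_eRk_union {K C L : Type*} [Field K] [Field C] [Field L] [Algebra K C]
    [Algebra C L] [Algebra K L] [IsScalarTower K C L] {S T : Set L}
    (hS : S ⊆ Set.range (algebraMap C L)) :
    (matroid K L).eRk S + (matroid C L).eRk T ≤ (matroid K L).eRk (S ∪ T) := by
  obtain ⟨I, hI⟩ := (matroid K L).exists_isBasis S (Set.subset_univ _)
  obtain ⟨J, hJ⟩ := (matroid C L).exists_isBasis T (Set.subset_univ _)
  have hIJ : AlgebraicIndependent K (Sum.elim ((↑) : J → L) ((↑) : I → L)) :=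
    (matroid_indep_iff.1 hI.indep).sumElim_of_tower (by simpa using hI.subset.trans hS)
      (matroid_indep_iff.1 hJ.indep)
  have hdisj : Disjoint J I := Set.disjoint_left.2 fun a ha hb =>
    Sum.inl_ne_inr (hIJ.injective (a₁ := .inl ⟨a, ha⟩) (a₂ := .inr ⟨a, hb⟩) rfl)
  have hunion : (matroid K L).Indep (I ∪ J) := by
    have := hIJ.to_subtype_range
    rw [Set.Sum.elim_range, Subtype.range_coe, Subtype.range_coe, Set.union_comm] at this
    exact matroid_indep_iff.2 this
  rw [← hI.encard_eq_eRk, ← hJ.encard_eq_eRk, ← Set.encard_union_eq hdisj.symm,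
    ← hunion.eRk_eq_encard]
  exact (matroid K L).eRk_mono (Set.union_subset_union hI.subset hJ.subset)

lemma coe_trdegOver (C : Set ℂ) {S : Set ℂ} (hS : S.Finite) :
    (trdegOver C S : ℕ∞) = (matroid (IntermediateField.adjoin ℚ C) ℂ).eRk S := by
  set M := matroid (IntermediateField.adjoin ℚ C) ℂ
  obtain ⟨r, hr⟩ := ENat.ne_top_iff_exists.1
    ((M.eRk_le_encard S).trans_lt hS.encard_lt_top).ne
  have hset : {k : ℕ | ∃ t : Finset ℂ, ↑t ⊆ S ∧ t.card = k ∧ AlgebraicIndependent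
      (IntermediateField.adjoin ℚ C) (fun x : {y : ℂ // y ∈ t} => (x : ℂ))} = Set.Iic r := by
    ext k
    rw [Set.mem_Iic, ← ENat.natCast_le_natCast, hr, Matroid.le_eRk_iff]
    constructor
    · rintro ⟨t, ht, rfl, hind⟩
      exact ⟨t, ht, hind, Set.encard_coe_eq_coe_finsetCard t⟩
    · rintro ⟨I, hIS, hI, hk⟩
      lift I to Finset ℂ using hS.subset hIS
      exact ⟨I, hIS, by simpa using hk, hI⟩
  rw [trdegOver, hset, csSup_Iic, hr]

end TranscendenceRank

section ExponentialClosure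

open AlgebraicIndependent

/-- The tuple `(x, exp x)`. -/
noncomputable def expPoint {ι : Type*} (x : ι → ℂ) : ι ⊕ ι → ℂ :=
  Sum.elim x fun i => exp (x i)

lemma range_expPoint {ι : Type*} (x : ι → ℂ) :
    Set.range (expPoint x) = Set.range x ∪ Set.range fun i => exp (x i) :=
  Set.Sum.elim_range _ _

lemma deltaExp_eq {B : Set ℂ} {n : ℕ} {x : Fin n → ℂ}
    (hx : LinearIndependent ℚ fun i => (Submodule.span ℚ B).mkQ (x i)) :
    deltaExp B x = trdegOver (B ∪ exp '' B) (Set.range (expPoint x)) - n := by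
  have h : linDimOver ℚ B (Set.range x) = n := by
    rw [linDimOver, Submodule.map_span, ← Set.range_comp]
    exact (finrank_span_eq_card hx).trans (Fintype.card_fin n)
  rw [deltaExp, h, range_expPoint]

lemma coe_deltaExp_add {B : Set ℂ} {n : ℕ} {x : Fin n → ℂ}
    (hx : LinearIndependent ℚ fun i => (Submodule.span ℚ B).mkQ (x i)) {d : ℕ}
    (hd : deltaExp B x = d) :
    (matroid (IntermediateField.adjoin ℚ (B ∪ exp '' B)) ℂ).eRk (Set.range (expPoint x)) =
      d + n := by
  rw [deltaExp_eq hx, sub_eq_iff_eq_add] at hd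
  rw [← coe_trdegOver _ (Set.finite_range _)]
  exact_mod_cast hd

variable {K : Type*} [Field K] [Algebra K ℂ]

lemma exp_smul_pow_den (q : ℚ) (a : ℂ) : exp (q • a) ^ q.den = exp a ^ q.num := by
  rw [← exp_nat_mul, ← exp_int_mul, Rat.smul_def, ← mul_assoc, ← Rat.cast_natCast,
    ← Rat.cast_mul, mul_comm (q.den : ℚ), Rat.mul_den_eq_num, Rat.cast_intCast]

lemma range_expPoint_subset_closure {ι κ : Type*} {x : ι → ℂ} {y : κ → ℂ}
    (hy : ∀ j, y j ∈ Submodule.span ℚ (Set.range x)) :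
    Set.range (expPoint y) ⊆ (matroid K ℂ).closure (Set.range (expPoint x)) := by
  let A := Algebra.adjoin K (Set.range (expPoint x))
  have mem_closure {a : ℂ} :
      a ∈ (matroid K ℂ).closure (Set.range (expPoint x)) ↔ IsAlgebraic A a := by
    rw [matroid_closure_eq, SetLike.mem_coe, Subalgebra.mem_algebraicClosure]
  have isAlgebraic_expPoint (s) : IsAlgebraic A (expPoint x s) :=
    isAlgebraic_algebraMap (⟨_, Algebra.subset_adjoin ⟨s, rfl⟩⟩ : A)
  have isAlgebraic_span {a : ℂ} (ha : a ∈ Submodule.span ℚ (Set.range x)) :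
      IsAlgebraic A a ∧ IsAlgebraic A (exp a) := by
    induction ha using Submodule.span_induction with
    | mem a ha =>
      obtain ⟨i, rfl⟩ := ha
      exact ⟨isAlgebraic_expPoint (.inl i), isAlgebraic_expPoint (.inr i)⟩
    | zero => simp [isAlgebraic_zero, isAlgebraic_one]
    | add a b _ _ ha hb => exact ⟨ha.1.add hb.1, exp_add a b ▸ ha.2.mul hb.2⟩
    | smul q a _ ha =>
      refine ⟨?_, .of_pow q.den_pos ?_⟩
      · rw [Rat.smul_def, ← map_ratCast (algebraMap K ℂ), IsScalarTower.algebraMap_apply K A ℂ]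
        exact (isAlgebraic_algebraMap _).mul ha.1
      · rw [exp_smul_pow_den]
        cases q.num with
        | ofNat m => simpa using ha.2.pow m
        | negSucc m => exact zpow_negSucc (exp a) m ▸ (ha.2.pow _).inv
  rintro _ ⟨j | j, rfl⟩
  exacts [mem_closure.2 (isAlgebraic_span (hy j)).1, mem_closure.2 (isAlgebraic_span (hy j)).2]

lemma derivation_exp_of_mem_span {D : Derivation K ℂ ℂ} {X : Set ℂ}
    (hX : ∀ a ∈ X, D (exp a) = exp a * D a) {a : ℂ} (ha : a ∈ Submodule.span ℚ X) :
    D (exp a) = exp a * D a := by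
  let logDeriv : ℂ →+ ℂ := AddMonoidHom.mk' (fun a => D (exp a) / exp a) fun a b => by
    have := exp_ne_zero a
    have := exp_ne_zero b
    rw [exp_add, Derivation.leibniz, smul_eq_mul, smul_eq_mul]
    field_simp
    ring
  have h := LinearMap.eqOn_span (f := logDeriv.toRatLinearMap)
    (g := (D : ℂ →+ ℂ).toRatLinearMap)
    (fun a ha => (div_eq_iff (exp_ne_zero a)).2 ((hX a ha).trans (mul_comm _ _))) ha
  exact ((div_eq_iff (exp_ne_zero a)).1 h).trans (mul_comm _ _)

end ExponentialClosure

section Nondegeneracy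

open AlgebraicIndependent

lemma exists_linearIndependent_ker_and_image {F E W : Type*} [Field F] [AddCommGroup E]
    [Module F E] [AddCommGroup W] [Module F W] {N : Submodule F E} {n : ℕ} {x : Fin n → E}
    (hx : LinearIndependent F fun i => N.mkQ (x i)) (f : E →ₗ[F] W) :
    ∃ (p q : ℕ) (c : Fin p → E) (y : Fin q → E), p + q = n ∧
      (∀ i, c i ∈ Submodule.span F (Set.range x)) ∧ (∀ i, f (c i) = 0) ∧
      LinearIndependent F (fun i => N.mkQ (c i)) ∧
      (∀ j, y j ∈ Submodule.span F (Set.range x)) ∧ LinearIndependent F (fun j => f (y j)) ∧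
      ∀ i, f (x i) ∈ Submodule.span F (Set.range fun j => f (y j)) := by
  set V := Submodule.span F (Set.range x)
  have : FiniteDimensional F V := .span_of_finite F (Set.finite_range x)
  let g : V →ₗ[F] W := f.domRestrict V
  let c := Module.finBasis F (LinearMap.ker g)
  let b := Module.finBasis F (LinearMap.range g)
  choose y hy using fun j => (b j).2
  have hV : Module.finrank F V = n :=
    (finrank_span_eq_card (.of_comp N.mkQ hx)).trans (Fintype.card_fin n)
  have disjoint_ker : Disjoint V (LinearMap.ker N.mkQ) := Submodule.range_ker_disjoint hx
  have mkQ_injective : Function.Injective (N.mkQ ∘ₗ V.subtype) := by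
    rwa [← LinearMap.ker_eq_bot, LinearMap.ker_comp, ← Submodule.disjoint_iff_comap_eq_bot]
  refine ⟨_, _, fun i => (c i : V), fun j => y j,
    (add_comm _ _).trans (g.finrank_range_add_finrank_ker.trans hV),
    fun i => (c i : V).2, fun i => (c i).2, ?_, fun j => (y j).2, ?_, fun i => ?_⟩
  · exact c.linearIndependent.map' ((N.mkQ ∘ₗ V.subtype) ∘ₗ (LinearMap.ker g).subtype)
      (LinearMap.ker_eq_bot.2 (mkQ_injective.comp Subtype.val_injective))
  · have := b.linearIndependent.map' _ (Submodule.ker_subtype _)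
    rwa [Function.comp_def, Submodule.coe_subtype, ← funext hy] at this
  · have := Submodule.mem_map_of_mem (f := (LinearMap.range g).subtype)
      (b.mem_span (g.rangeRestrict ⟨x i, Submodule.subset_span ⟨i, rfl⟩⟩))
    rwa [Submodule.map_span, ← Set.range_comp, Function.comp_def, Submodule.coe_subtype,
      ← funext hy] at this

lemma eRk_expPoint_add_card_add_one_le {K : Type*} [Field K] [Algebra K ℂ] {D : Derivation K ℂ ℂ}
    {ι κ : Type*} [Fintype κ] [Nonempty κ] {c : ι → ℂ} {y : κ → ℂ}
    (hc : ∀ i, D (c i) = 0) (hexpc : ∀ i, D (exp (c i)) = 0)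
    (hy : ∀ j, D (exp (y j)) = exp (y j) * D (y j))
    (hind : LinearIndependent ℤ fun j => D (y j)) :
    (matroid K ℂ).eRk (Set.range (expPoint c)) + (Fintype.card κ + 1) ≤
      (matroid K ℂ).eRk (Set.range (expPoint c) ∪ Set.range (expPoint y)) := by
  have hsub : Set.range (expPoint c) ⊆ Set.range (algebraMap (constants D) ℂ) := by
    rintro _ ⟨i | i, rfl⟩
    exacts [⟨⟨_, mem_constants.2 (hc i)⟩, rfl⟩, ⟨⟨_, mem_constants.2 (hexpc i)⟩, rfl⟩]
  refine le_trans (add_le_add_right ?_ _) (eRk_add_eRk_le_eRk_union hsub)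
  rw [range_expPoint]
  exact Order.add_one_le_of_lt (card_lt_eRk_constants (fun j => exp_ne_zero _) hy hind)

theorem derivation_eq_zero_of_deltaExp_eq_zero {B : Set ℂ}
    (hB : ∀ (n : ℕ) (x : Fin n → ℂ), 0 ≤ deltaExp B x) {n : ℕ} {x : Fin n → ℂ}
    (hx : LinearIndependent ℚ fun i => (Submodule.span ℚ B).mkQ (x i)) (hδ : deltaExp B x = 0)
    {D : Derivation (IntermediateField.adjoin ℚ (B ∪ exp '' B)) ℂ ℂ}
    (hD : ∀ i, D (exp (x i)) = exp (x i) * D (x i)) (i : Fin n) : D (x i) = 0 := by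
  set M := matroid (IntermediateField.adjoin ℚ (B ∪ exp '' B)) ℂ
  obtain ⟨p, q, c, y, hpq, hc, hDc, hcind, hy, hyind, hspan⟩ :=
    exists_linearIndependent_ker_and_image hx (D : ℂ →+ ℂ).toRatLinearMap
  have hDspan {a : ℂ} (ha : a ∈ Submodule.span ℚ (Set.range x)) : D (exp a) = exp a * D a :=
    derivation_exp_of_mem_span (Set.forall_mem_range.2 hD) ha
  rcases Nat.eq_zero_or_pos q with rfl | hq
  · simpa using hspan i
  exfalso
  have : NeZero q := ⟨hq.ne'⟩
  obtain ⟨d, hd⟩ := Int.eq_ofNat_of_zero_le (hB p c)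
  have lower : M.eRk (Set.range (expPoint c)) + (q + 1) ≤
      M.eRk (Set.range (expPoint c) ∪ Set.range (expPoint y)) := by
    simpa using eRk_expPoint_add_card_add_one_le hDc
      (fun i => by rw [hDspan (hc i), show D (c i) = 0 from hDc i, mul_zero])
      (fun j => hDspan (hy j)) (hyind.restrict_scalars' ℤ)
  have upper : M.eRk (Set.range (expPoint c) ∪ Set.range (expPoint y)) ≤ n := by
    have hn : M.eRk (Set.range (expPoint x)) = n := by
      simpa using coe_deltaExp_add hx (d := 0) hδ
    rw [← hn, ← M.eRk_closure_eq (Set.range (expPoint x))]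
    exact M.eRk_mono (Set.union_subset (range_expPoint_subset_closure hc)
      (range_expPoint_subset_closure hy))
  rw [coe_deltaExp_add hcind hd] at lower
  have : d + p + (q + 1) ≤ n := mod_cast lower.trans upper
  lia

end Nondegeneracy

section NondegenerateZeros

lemma countable_setOf_hasFDerivAt_antilipschitz {𝕜 E F : Type*} [NontriviallyNormedField 𝕜]
    [NormedAddCommGroup E] [NormedSpace 𝕜 E] [HereditarilyLindelofSpace E]
    [NormedAddCommGroup F] [NormedSpace 𝕜 F] (f : E → F) (c : F) :
    {x | f x = c ∧ ∃ f' : E →L[𝕜] F, HasFDerivAt f f' x ∧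
      ∃ C, AntilipschitzWith C f'}.Countable := by
  refine (HereditarilyLindelofSpace.isLindelof _).countable ?_
  rw [discreteTopology_subtype_iff]
  rintro x ⟨-, f', hf, hf'⟩
  rw [← disjoint_iff, Filter.disjoint_principal_right]
  filter_upwards [hf.eventually_ne (c := c) hf'] with z hz hzc using hz hzc.1

open MvPolynomial

lemma hasFDerivAt_aeval {σ R 𝕜 : Type*} [Fintype σ] [CommSemiring R]
    [NontriviallyNormedField 𝕜] [Algebra R 𝕜] (p : MvPolynomial σ R) (z : σ → 𝕜) :
    HasFDerivAt (fun z => aeval z p)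
      (∑ s, aeval z (pderiv s p) • (ContinuousLinearMap.proj s : (σ → 𝕜) →L[𝕜] 𝕜)) z := by
  classical
  induction p using MvPolynomial.induction_on with
  | C a =>
    simp only [aeval_C]
    exact (hasFDerivAt_const _ z).congr_fderiv (by ext; simp)
  | add p q hp hq =>
    simp only [map_add]
    exact (hp.add hq).congr_fderiv (by ext; simp [add_mul, Finset.sum_add_distrib])
  | mul_X p s hp =>
    simp only [map_mul, aeval_X]
    refine (hp.mul (hasFDerivAt_apply (F' := fun _ => 𝕜) s z)).congr_fderiv ?_
    ext v
    simp [pderiv_X, Pi.single_apply, add_mul, Finset.sum_add_distrib, Finset.mul_sum, mul_assoc,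
      apply_ite, ite_mul]

lemma sum_aeval_pderiv_mul_eq_zero {σ R A : Type*} [Fintype σ] [CommRing R] [CommRing A]
    [Algebra R A] {G : Set (MvPolynomial σ R)} {z w : σ → A} (hG : ∀ p ∈ G, aeval z p = 0)
    (hw : ∀ p ∈ G, ∑ s, aeval z (pderiv s p) * w s = 0) {p : MvPolynomial σ R}
    (hp : p ∈ Ideal.span G) : ∑ s, aeval z (pderiv s p) * w s = 0 := by
  have hGz {q} (hq : q ∈ Ideal.span G) : aeval z q = 0 :=
    (Ideal.span_le (I := RingHom.ker (aeval (R := R) z))).2 hG hq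
  induction hp using Submodule.span_induction with
  | mem p hp => exact hw p hp
  | zero => simp
  | add p q _ _ hp hq => simp only [map_add, add_mul, Finset.sum_add_distrib, hp, hq, add_zero]
  | smul a q hqG hq =>
    simp only [smul_eq_mul, Derivation.leibniz, map_add, map_mul, hGz hqG, zero_mul, add_zero,
      mul_assoc, ← Finset.mul_sum, hq, mul_zero]

/-- The differential of `x ↦ (x, exp x)` at `x`, applied to the tangent vector `v`. -/
noncomputable def expTangent {ι : Type*} (x v : ι → ℂ) : ι ⊕ ι → ℂ :=
  Sum.elim v fun i => exp (x i) * v i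

/-- The nondegenerate zeros of the system of exponential polynomials `p(x, exp x) = 0`, `p ∈ G`:
those at which the differentials of the equations have no common kernel. -/
def nondegenerateExpZeros {ι R : Type*} [Fintype ι] [CommSemiring R] [Algebra R ℂ]
    (G : Finset (MvPolynomial (ι ⊕ ι) R)) : Set (ι → ℂ) :=
  {x | (∀ p ∈ G, aeval (expPoint x) p = 0) ∧
    ∀ v, (∀ p ∈ G, ∑ s, aeval (expPoint x) (pderiv s p) * expTangent x v s = 0) → v = 0}

lemma hasFDerivAt_aeval_expPoint {ι R : Type*} [Fintype ι] [CommSemiring R] [Algebra R ℂ]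
    (p : MvPolynomial (ι ⊕ ι) R) (x : ι → ℂ) :
    ∃ f' : (ι → ℂ) →L[ℂ] ℂ, HasFDerivAt (fun x => aeval (expPoint x) p) f' x ∧
      ∀ v, f' v = ∑ s, aeval (expPoint x) (pderiv s p) * expTangent x v s := by
  let proj (i : ι) : (ι → ℂ) →L[ℂ] ℂ := .proj i
  have hexp : HasFDerivAt expPoint
      (ContinuousLinearMap.pi (Sum.elim proj fun i => exp (x i) • proj i)) x := by
    refine hasFDerivAt_pi.2 ?_
    rintro (i | i)
    exacts [hasFDerivAt_apply i x, (hasFDerivAt_apply i x).cexp]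
  refine ⟨_, (hasFDerivAt_aeval p (expPoint x)).comp x hexp, fun v => ?_⟩
  simp [expTangent, proj]

lemma countable_nondegenerateExpZeros {ι R : Type*} [Fintype ι] [CommSemiring R] [Algebra R ℂ]
    (G : Finset (MvPolynomial (ι ⊕ ι) R)) : (nondegenerateExpZeros G).Countable := by
  refine (countable_setOf_hasFDerivAt_antilipschitz (𝕜 := ℂ)
    (fun x (p : G) => aeval (expPoint x) p.1) 0).mono ?_
  refine fun x hx => ⟨funext fun p => hx.1 p p.2, ?_⟩
  choose f' hf' hf'_apply using fun p : G => hasFDerivAt_aeval_expPoint p.1 x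
  have ker_eq_bot : LinearMap.ker (ContinuousLinearMap.pi f' : (ι → ℂ) →ₗ[ℂ] G → ℂ) = ⊥ :=
    LinearMap.ker_eq_bot'.2 fun v hv => hx.2 v fun p hp =>
      (hf'_apply ⟨p, hp⟩ v).symm.trans (congrFun hv ⟨p, hp⟩)
  obtain ⟨C, -, hC⟩ := LinearMap.exists_antilipschitzWith _ ker_eq_bot
  exact ⟨_, hasFDerivAt_pi.2 hf', C, hC⟩

lemma exists_mem_nondegenerateExpZeros {K ι : Type*} [Fintype ι] [Field K] [Algebra K ℂ]
    {x : ι → ℂ} (hx : ∀ D : Derivation K ℂ ℂ,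
      (∀ i, D (exp (x i)) = exp (x i) * D (x i)) → ∀ i, D (x i) = 0) :
    ∃ G : Finset (MvPolynomial (ι ⊕ ι) K), x ∈ nondegenerateExpZeros G := by
  obtain ⟨G, hG⟩ := IsNoetherian.noetherian
    (RingHom.ker (aeval (expPoint x) : MvPolynomial (ι ⊕ ι) K →ₐ[K] ℂ))
  have aeval_eq_zero {p} : p ∈ Ideal.span (G : Set (MvPolynomial (ι ⊕ ι) K)) ↔
      aeval (expPoint x) p = 0 := by
    rw [Ideal.span, hG, RingHom.mem_ker]
  have hG0 (p) (hp : p ∈ G) : aeval (expPoint x) p = 0 :=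
    aeval_eq_zero.1 (Ideal.subset_span hp)
  refine ⟨G, hG0, fun v hv => ?_⟩
  obtain ⟨D, hD⟩ := exists_derivation_of_forall_aeval_eq_zero (expPoint x) (expTangent x v)
    fun p hp => sum_aeval_pderiv_mul_eq_zero hG0 hv (aeval_eq_zero.2 hp)
  have hDx (i) : D (x i) = v i := hD (.inl i)
  exact funext fun i => (hDx i).symm.trans <|
    hx D (fun i => (hD (.inr i)).trans (congrArg (exp (x i) * ·) (hDx i).symm)) i

end NondegenerateZeros

section Countability

lemma countable_adjoin {F E : Type*} [Field F] [Field E] [Algebra F E] [Countable F] {S : Set E}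
    (hS : S.Countable) : (IntermediateField.adjoin F S : Set E).Countable := by
  have h := IntermediateField.lift_cardinalMk_adjoin_le F S
  have := hS.to_subtype
  rw [← Set.countable_coe_iff, ← Cardinal.mk_le_aleph0_iff]
  refine Cardinal.lift_le_aleph0.1 (h.trans ?_)
  simp

lemma countable_mvPolynomial (σ R : Type*) [Countable σ] [CommSemiring R] [Countable R] :
    Countable (MvPolynomial σ R) := by
  rw [← Cardinal.mk_le_aleph0_iff]
  exact MvPolynomial.cardinalMk_le_max_lift.trans (by simp)

theorem statement11_general (B : Set ℂ) (hB : B.Countable)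
    (hstrong : ∀ (n : ℕ) (x : Fin n → ℂ), deltaExp B x ≥ 0) :
    Set.Countable {x₀ : ℂ | x₀ ∈ Submodule.span ℚ B ∨
      ∃ (n : ℕ) (x : Fin n → ℂ), (∃ i, x i = x₀)
        ∧ LinearIndependent ℚ (fun i => (Submodule.span ℚ B).mkQ (x i))
        ∧ deltaExp B x = 0} := by
  let K := IntermediateField.adjoin ℚ (B ∪ exp '' B)
  have hK : (K : Set ℂ).Countable := countable_adjoin (hB.union (hB.image _))
  have span_le : Submodule.span ℚ B ≤ Subalgebra.toSubmodule K.toSubalgebra :=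
    Submodule.span_le.2 fun b hb => IntermediateField.subset_adjoin ℚ _ (.inl hb)
  have := hK.to_subtype
  have := fun n => countable_mvPolynomial (Fin n ⊕ Fin n) K
  have hcover : ((K : Set ℂ) ∪ ⋃ (n : ℕ) (G : Finset (MvPolynomial (Fin n ⊕ Fin n) K))
      (i : Fin n), (fun x => x i) '' nondegenerateExpZeros G).Countable :=
    hK.union <| Set.countable_iUnion fun n => Set.countable_iUnion fun G =>
      Set.countable_iUnion fun i => (countable_nondegenerateExpZeros G).image _
  refine hcover.mono ?_
  rintro x₀ (h | ⟨n, x, ⟨i, rfl⟩, hx, hδ⟩)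
  · exact .inl (span_le h)
  · obtain ⟨G, hG⟩ := exists_mem_nondegenerateExpZeros (K := K) fun D hD =>
      derivation_eq_zero_of_deltaExp_eq_zero hstrong hx hδ hD
    exact .inr <| Set.mem_iUnion.2 ⟨n, Set.mem_iUnion₂.2 ⟨G, i, x, hG, rfl⟩⟩

end Countability

/-- assume the Schanuel Conjecture and let `B ⊆ ℂ` be finite and
strong with respect to `δ_exp`. Then the set of `x₀ ∈ ℂ` lying in the ℚ-span
of `B`, or contained in a tuple `x`, ℚ-linearly independent over the ℚ-span of
`B`, with `δ_exp(x/B) = 0`, is countable. -/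
theorem statement11
    (hSC : ∀ (n : ℕ) (x : Fin n → ℂ), LinearIndependent ℚ x →
      trdeg (Set.range x ∪ Set.range fun i => Complex.exp (x i)) ≥ n)
    (B : Set ℂ) (hBfin : B.Finite)
    (hstrong : ∀ (n : ℕ) (x : Fin n → ℂ), deltaExp B x ≥ 0) :
    Set.Countable {x₀ : ℂ | x₀ ∈ Submodule.span ℚ B ∨
      ∃ (n : ℕ) (x : Fin n → ℂ), (∃ i, x i = x₀)
        ∧ LinearIndependent ℚ (fun i => (Submodule.span ℚ B).mkQ (x i))
        ∧ deltaExp B x = 0} :=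
  statement11_general B hBfin.countable hstrong
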